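/- arXiv:1901.01872 — 2 statements merged into one kernel-verified Lean document; each statement's English description precedes it below -/
import Mathlib

section
/- Suppose each f_i'' is L-Lipschitz and the stepsize parameter ε > 0 is given. Let x ∈ ℝⁿ, let i be any index, and let x⁺ = x^(i) be the asynchronous update of x by agent i. Then for every y ∈ ℝⁿ: ‖D(x⁺)^{1/2} y‖ ≤ (1 + C₂‖g(x)‖^{1/2}) ‖D(x)^{1/2} y‖, where C₂ = (εαLΛ/(π(2(1−Δ)+αm)))^{1/2} and ‖·‖ is the Euclidean norm. -/
open Matrix BigOperators

noncomputable section

/-- Second derivative of the `i`-th local objective. -/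
def d2 {n : ℕ} (f : Fin n → ℝ → ℝ) (i : Fin n) (s : ℝ) : ℝ := deriv (deriv (f i)) s

/-- The diagonal matrix `G(x)` with `G(x)_ii = f_i''(x_i)`. -/
def Gmat {n : ℕ} (f : Fin n → ℝ → ℝ) (x : Fin n → ℝ) : Matrix (Fin n) (Fin n) ℝ :=
  Matrix.diagonal (fun i => d2 f i (x i))

/-- The Hessian `H(x) = I − W + αG(x)` of the penalized objective. -/
def Hmat {n : ℕ} (W : Matrix (Fin n) (Fin n) ℝ) (f : Fin n → ℝ → ℝ) (α : ℝ)
    (x : Fin n → ℝ) : Matrix (Fin n) (Fin n) ℝ :=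
  1 - W + α • Gmat f x

/-- `B = I − 2W_d + W`. -/
def Bmat {n : ℕ} (W : Matrix (Fin n) (Fin n) ℝ) : Matrix (Fin n) (Fin n) ℝ :=
  1 - (2 : ℝ) • Matrix.diagonal (fun i => W i i) + W

/-- Diagonal entries of the splitting matrix `D(x) = αG(x) + 2(I − W_d)`. -/
def dEntry {n : ℕ} (W : Matrix (Fin n) (Fin n) ℝ) (f : Fin n → ℝ → ℝ) (α : ℝ)
    (x : Fin n → ℝ) (i : Fin n) : ℝ :=
  α * d2 f i (x i) + 2 * (1 - W i i)

/-- `D(x) = αG(x) + 2(I − W_d)`. -/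
def Dmat {n : ℕ} (W : Matrix (Fin n) (Fin n) ℝ) (f : Fin n → ℝ → ℝ) (α : ℝ)
    (x : Fin n → ℝ) : Matrix (Fin n) (Fin n) ℝ :=
  Matrix.diagonal (dEntry W f α x)

/-- `D(x)^{1/2}`. -/
def Dhalf {n : ℕ} (W : Matrix (Fin n) (Fin n) ℝ) (f : Fin n → ℝ → ℝ) (α : ℝ)
    (x : Fin n → ℝ) : Matrix (Fin n) (Fin n) ℝ :=
  Matrix.diagonal (fun i => Real.sqrt (dEntry W f α x i))

/-- `D(x)^{-1/2}`. -/
def Dinvhalf {n : ℕ} (W : Matrix (Fin n) (Fin n) ℝ) (f : Fin n → ℝ → ℝ) (α : ℝ)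
    (x : Fin n → ℝ) : Matrix (Fin n) (Fin n) ℝ :=
  Matrix.diagonal (fun i => (Real.sqrt (dEntry W f α x i))⁻¹)

/-- The approximate Hessian inverse
`Ĥ(x)⁻¹ = D(x)^{-1/2}(I + D(x)^{-1/2} B D(x)^{-1/2}) D(x)^{-1/2}`. -/
def Hhatinv {n : ℕ} (W : Matrix (Fin n) (Fin n) ℝ) (f : Fin n → ℝ → ℝ) (α : ℝ)
    (x : Fin n → ℝ) : Matrix (Fin n) (Fin n) ℝ :=
  Dinvhalf W f α x * (1 + Dinvhalf W f α x * Bmat W * Dinvhalf W f α x) * Dinvhalf W f α x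

/-- The penalized objective `F(x) = (1/2) xᵀ(I−W)x + α Σᵢ f_i(x_i)`. -/
def Fobj {n : ℕ} (W : Matrix (Fin n) (Fin n) ℝ) (f : Fin n → ℝ → ℝ) (α : ℝ)
    (x : Fin n → ℝ) : ℝ :=
  (1 / 2) * (x ⬝ᵥ ((1 - W).mulVec x)) + α * ∑ i, f i (x i)

/-- The gradient `g(x) = (I − W)x + α (f_i'(x_i))_i` of the penalized objective. -/
def gvec {n : ℕ} (W : Matrix (Fin n) (Fin n) ℝ) (f : Fin n → ℝ → ℝ) (α : ℝ)
    (x : Fin n → ℝ) : Fin n → ℝ :=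
  fun i => ((1 - W).mulVec x) i + α * deriv (f i) (x i)

/-- The asynchronous update `x^(i)`: agent `i` moves along the approximate Newton
direction with stepsize `ε / p i`; other coordinates are unchanged. -/
def upd {n : ℕ} (W : Matrix (Fin n) (Fin n) ℝ) (f : Fin n → ℝ → ℝ) (α : ℝ)
    (p : Fin n → ℝ) (ε : ℝ) (x : Fin n → ℝ) (i : Fin n) : Fin n → ℝ :=
  Function.update x i (x i - (ε / p i) * ((Hhatinv W f α x).mulVec (gvec W f α x)) i)

/-- Euclidean norm on `ℝⁿ`. -/
def eucNorm {n : ℕ} (v : Fin n → ℝ) : ℝ := Real.sqrt (∑ i, v i ^ 2)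


theorem aux_dir {n : ℕ} (B : Fin n → Fin n → ℝ) (D g : Fin n → ℝ) (ρ d N : ℝ)
    (hB : ∀ i j, 0 ≤ B i j) (hsymm : ∀ i j, B i j = B j i)
    (hρ : 0 ≤ ρ) (hd : 0 < d) (hD : ∀ i, d ≤ D i) (hN : 0 ≤ N)
    (hrow : ∀ i, ∑ j, B i j ≤ ρ * D i) (hg : ∑ j, g j ^ 2 = N ^ 2) (i : Fin n) :
    |(D i)⁻¹ * (g i + ∑ j, B i j * ((D j)⁻¹ * g j))| ≤ (1 + ρ) / d * N := by
  have hDp : ∀ j, 0 < D j := fun j => lt_of_lt_of_le hd (hD j)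
  have hle : ∀ j, B i j ≤ ρ * D j := fun j => by
    rw [hsymm]
    exact le_trans (Finset.single_le_sum (f := fun k => B j k) (fun k _ => hB j k)
      (Finset.mem_univ i)) (hrow j)
  have h1 : (∑ j, B i j * ((D j)⁻¹ * g j)) ^ 2 ≤
      (∑ j, B i j) * ∑ j, B i j * ((D j)⁻¹ * g j) ^ 2 := by
    apply Finset.sum_sq_le_sum_mul_sum_of_sq_eq_mul
    · intro j _; exact hB i j
    · intro j _; exact mul_nonneg (hB i j) (sq_nonneg _)
    · intro j _; ring
  have h2 : ∑ j, B i j * ((D j)⁻¹ * g j) ^ 2 ≤ ρ / d * N ^ 2 := by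
    rw [← hg, Finset.mul_sum]
    apply Finset.sum_le_sum
    intro j _
    calc B i j * ((D j)⁻¹ * g j) ^ 2 ≤ ρ * D j * ((D j)⁻¹ * g j) ^ 2 :=
          mul_le_mul_of_nonneg_right (hle j) (sq_nonneg _)
      _ = ρ / D j * g j ^ 2 := by have := (hDp j).ne'; field_simp
      _ ≤ ρ / d * g j ^ 2 := by have := hD j; gcongr
  have h3 : (∑ j, B i j * ((D j)⁻¹ * g j)) ^ 2 ≤ (ρ * D i) * (ρ / d * N ^ 2) :=
    h1.trans (mul_le_mul (hrow i) h2
      (Finset.sum_nonneg fun j _ => mul_nonneg (hB i j) (sq_nonneg _))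
      (mul_nonneg hρ (hDp i).le))
  set w := ∑ j, B i j * ((D j)⁻¹ * g j) with hw
  have hgi : |g i| ≤ N := by
    apply abs_le_of_sq_le_sq _ hN
    rw [← hg]
    exact Finset.single_le_sum (f := fun k => g k ^ 2) (fun k _ => sq_nonneg _)
      (Finset.mem_univ i)
  have hinv : (D i)⁻¹ ≤ d⁻¹ := inv_anti₀ hd (hD i)
  have hip : 0 < (D i)⁻¹ := inv_pos.mpr (hDp i)
  have h4 : |(D i)⁻¹ * w| ≤ ρ / d * N := by
    apply abs_le_of_sq_le_sq _ (by positivity)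
    calc ((D i)⁻¹ * w) ^ 2 = ((D i)⁻¹) ^ 2 * w ^ 2 := by ring
      _ ≤ ((D i)⁻¹) ^ 2 * ((ρ * D i) * (ρ / d * N ^ 2)) := by gcongr
      _ = (D i)⁻¹ * (ρ * (ρ / d * N ^ 2)) := by have := (hDp i).ne'; field_simp
      _ ≤ d⁻¹ * (ρ * (ρ / d * N ^ 2)) := by gcongr
      _ = (ρ / d * N) ^ 2 := by field_simp
  have h5 : |(D i)⁻¹ * g i| ≤ d⁻¹ * N := by
    rw [abs_mul, abs_of_pos hip]; gcongr
  calc _ = |(D i)⁻¹ * g i + (D i)⁻¹ * w| := by rw [mul_add]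
    _ ≤ _ := abs_add_le _ _
    _ ≤ d⁻¹ * N + ρ / d * N := add_le_add h5 h4
    _ = _ := by field_simp

theorem Hhat_apply {n : ℕ} (W : Matrix (Fin n) (Fin n) ℝ) (f : Fin n → ℝ → ℝ) (α : ℝ)
    (x g : Fin n → ℝ) (hD : ∀ i, 0 < dEntry W f α x i) (i : Fin n) :
    (Hhatinv W f α x).mulVec g i = (dEntry W f α x i)⁻¹ *
      (g i + ∑ j, Bmat W i j * ((dEntry W f α x j)⁻¹ * g j)) := by
  have hs : ∀ j, (Real.sqrt (dEntry W f α x j))⁻¹ * (Real.sqrt (dEntry W f α x j))⁻¹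
      = (dEntry W f α x j)⁻¹ := fun j => by
    rw [← mul_inv, Real.mul_self_sqrt (hD j).le]
  have : Hhatinv W f α x = Dinvhalf W f α x * Dinvhalf W f α x +
      (Dinvhalf W f α x * Dinvhalf W f α x) * Bmat W *
        (Dinvhalf W f α x * Dinvhalf W f α x) := by
    unfold Hhatinv; noncomm_ring
  have h2 : Dinvhalf W f α x * Dinvhalf W f α x =
      Matrix.diagonal (fun j => (dEntry W f α x j)⁻¹) := by
    unfold Dinvhalf
    rw [Matrix.diagonal_mul_diagonal]
    simp only [hs]
  rw [this, h2, Matrix.add_mulVec, Pi.add_apply, ← Matrix.mulVec_mulVec,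
    ← Matrix.mulVec_mulVec, Matrix.mulVec_diagonal, Matrix.mulVec_diagonal, mul_add]
  congr 2
  simp only [Matrix.mulVec, dotProduct]
  refine Finset.sum_congr rfl fun j _ => ?_
  have := Matrix.mulVec_diagonal (fun j => (dEntry W f α x j)⁻¹) g j
  simp only [Matrix.mulVec, dotProduct] at this
  rw [this]

/-- One-step control of the weighted norm: with `x⁺ = x^(i)`,
`‖D(x⁺)^{1/2} y‖ ≤ (1 + C₂‖g(x)‖^{1/2})‖D(x)^{1/2} y‖`. -/
theorem stmt16 (n : ℕ) (hn : 1 ≤ n)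
    (W : Matrix (Fin n) (Fin n) ℝ) (hWsymm : W.IsSymm)
    (hWnonneg : ∀ i j, 0 ≤ W i j) (hWlt : ∀ i j, W i j < 1)
    (hWone : W.mulVec (fun _ => 1) = fun _ => 1)
    (hWnull : ∀ x : Fin n → ℝ, ((1 - W).mulVec x = 0 ↔ ∃ c : ℝ, x = fun _ => c))
    (δ Δ : ℝ) (hδ : 0 < δ) (hδΔ : δ ≤ Δ) (hΔ : Δ < 1)
    (hWdiag : ∀ i, δ ≤ W i i ∧ W i i ≤ Δ)
    (f : Fin n → ℝ → ℝ) (hf : ∀ i, ContDiff ℝ 2 (f i))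
    (hconv : ∀ i, ConvexOn ℝ Set.univ (f i))
    (m M : ℝ) (hm : 0 < m) (hmM : m ≤ M)
    (hd2 : ∀ i s, m ≤ d2 f i s ∧ d2 f i s ≤ M)
    (α : ℝ) (hα : 0 < α)
    (p : Fin n → ℝ) (pmin pmax : ℝ) (hpmin : 0 < pmin) (hpmax : pmax < 1)
    (hp : ∀ i, pmin ≤ p i ∧ p i ≤ pmax) (hpsum : ∑ i, p i = 1)
    (L : ℝ) (hLip : ∀ i s s', |d2 f i s - d2 f i s'| ≤ L * |s - s'|)
    (ρ Lam : ℝ) (hρ : ρ = 2 * (1 - δ) / (2 * (1 - δ) + α * m))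
    (hLam : Lam = (1 + ρ) / (2 * (1 - Δ) + α * m))
    (ε : ℝ) (hε : 0 < ε)
    (C2 : ℝ) (hC2 : C2 = Real.sqrt (ε * α * L * Lam / (pmin * (2 * (1 - Δ) + α * m)))) :
    ∀ (x : Fin n → ℝ) (i : Fin n) (y : Fin n → ℝ),
      eucNorm ((Dhalf W f α (upd W f α p ε x i)).mulVec y) ≤
        (1 + C2 * Real.sqrt (eucNorm (gvec W f α x))) *
          eucNorm ((Dhalf W f α x).mulVec y) := by
  intro x i y
  set d := 2 * (1 - Δ) + α * m with hd
  have hαm : 0 < α * m := mul_pos hα hm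
  have hdpos : 0 < d := by rw [hd]; linarith
  have hδ1 : 0 < 1 - δ := by linarith
  have hρ0 : 0 ≤ ρ := by rw [hρ]; positivity
  have hρe : ρ * (2 * (1 - δ) + α * m) = 2 * (1 - δ) := by
    rw [hρ]; field_simp
  have hρ1 : ρ ≤ 1 := by rw [hρ, div_le_one (by positivity)]; linarith
  have hDm : ∀ z j, 2 * (1 - W j j) + α * m ≤ dEntry W f α z j := fun z j => by
    have := mul_le_mul_of_nonneg_left (hd2 j (z j)).1 hα.le
    unfold dEntry; linarith
  have hDd : ∀ z j, d ≤ dEntry W f α z j := fun z j => by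
    have := hDm z j
    have := (hWdiag j).2
    rw [hd]; linarith
  have hDp : ∀ z j, 0 < dEntry W f α z j := fun z j => hdpos.trans_le (hDd z j)
  have hBij : ∀ a b, Bmat W a b = if a = b then 1 - W a a else W a b := fun a b => by
    unfold Bmat
    by_cases h : a = b
    · subst h; simp; ring
    · simp [h]
  have hBs : ∀ a b, Bmat W a b = Bmat W b a := fun a b => by
    rw [hBij, hBij]
    by_cases h : a = b
    · subst h; rfl
    · rw [if_neg h, if_neg (Ne.symm h), hWsymm.apply]
  have hB0 : ∀ a b, 0 ≤ Bmat W a b := fun a b => by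
    rw [hBij]; split_ifs
    · linarith [hWlt a a]
    · exact hWnonneg a b
  have hrowW : ∀ a, ∑ b, W a b = 1 := fun a => by
    have := congrFun hWone a
    simpa [Matrix.mulVec, dotProduct] using this
  have hrow : ∀ a, ∑ b, Bmat W a b = 2 * (1 - W a a) := fun a => by
    have : ∀ b, Bmat W a b = W a b + if a = b then 1 - 2 * W a a else 0 := fun b => by
      rw [hBij]
      by_cases h : a = b
      · subst h; simp; ring
      · simp [h]
    simp only [this, Finset.sum_add_distrib, hrowW, Finset.sum_ite_eq, Finset.mem_univ, if_true]
    ring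
  have hrowρ : ∀ a, ∑ b, Bmat W a b ≤ ρ * dEntry W f α x a := fun a => by
    rw [hrow]
    have h1 := mul_le_mul_of_nonneg_left (hDm x a) hρ0
    have h2 := (hWdiag a).1
    nlinarith
  set N := eucNorm (gvec W f α x) with hNdef
  have hN0 : 0 ≤ N := Real.sqrt_nonneg _
  have hNsq : ∑ j, gvec W f α x j ^ 2 = N ^ 2 := by
    rw [hNdef, eucNorm, Real.sq_sqrt (Finset.sum_nonneg fun j _ => sq_nonneg _)]
  have hdir := aux_dir (fun a b => Bmat W a b) (dEntry W f α x) (gvec W f α x) ρ d N hB0 hBs hρ0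
    hdpos (hDd x) hN0 hrowρ hNsq i
  rw [← Hhat_apply W f α x _ (hDp x) i, ← hLam] at hdir
  have hL : 0 ≤ L := by
    have := (abs_nonneg _).trans (hLip i 1 0)
    simpa using this
  have hLam0 : 0 ≤ Lam := by rw [hLam]; positivity
  set K := ε * α * L * Lam / (pmin * d) with hK
  have hK0 : 0 ≤ K := by positivity
  have hC0 : 0 ≤ C2 := by rw [hC2]; exact Real.sqrt_nonneg _
  have hCsq : C2 ^ 2 = K := by rw [hC2, Real.sq_sqrt hK0]
  have hpi : 0 < p i := hpmin.trans_le (hp i).1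
  have hent : ∀ j, dEntry W f α (upd W f α p ε x i) j ≤ (1 + K * N) * dEntry W f α x j := by
    intro j
    have hx := hDd x j
    have hKN : K * N * d ≤ K * N * dEntry W f α x j := by gcongr
    by_cases h : j = i
    · subst h
      have h1 := hLip j (upd W f α p ε x j j) (x j)
      have h2 : |upd W f α p ε x j j - x j| ≤ ε / pmin * (Lam * N) := by
        have : upd W f α p ε x j j - x j =
            -((ε / p j) * ((Hhatinv W f α x).mulVec (gvec W f α x)) j) := by
          simp [upd]
        rw [this, abs_neg, abs_mul, abs_of_pos (by positivity)]
        have := (hp j).1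
        gcongr
      have h3 := (le_abs_self _).trans (h1.trans (mul_le_mul_of_nonneg_left h2 hL))
      have h4 := mul_le_mul_of_nonneg_left h3 hα.le
      have h5 : α * (L * (ε / pmin * (Lam * N))) = K * N * d := by
        rw [hK]; field_simp
      have h6 : dEntry W f α (upd W f α p ε x j) j - dEntry W f α x j =
        α * (d2 f j (upd W f α p ε x j j) - d2 f j (x j)) := by unfold dEntry; ring
      linarith
    · have : dEntry W f α (upd W f α p ε x i) j = dEntry W f α x j := by
        simp [dEntry, upd, h]
      rw [this]
      have : 0 ≤ K * N * d := by positivity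
      linarith
  have hnorm : ∀ z, eucNorm ((Dhalf W f α z).mulVec y) =
      Real.sqrt (∑ j, dEntry W f α z j * y j ^ 2) := fun z => by
    unfold eucNorm Dhalf
    congr 1
    refine Finset.sum_congr rfl fun j _ => ?_
    rw [Matrix.mulVec_diagonal, mul_pow, Real.sq_sqrt (hDp z j).le]
  rw [hnorm, hnorm]
  have hsN := Real.sqrt_nonneg N
  have hfac : 0 ≤ 1 + C2 * Real.sqrt N := by positivity
  rw [← Real.sqrt_sq hfac, ← Real.sqrt_mul (sq_nonneg _)]
  apply Real.sqrt_le_sqrt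
  rw [Finset.mul_sum]
  refine Finset.sum_le_sum fun j _ => ?_
  rw [← mul_assoc]
  refine mul_le_mul_of_nonneg_right ((hent j).trans ?_) (sq_nonneg _)
  refine mul_le_mul_of_nonneg_right ?_ (hDp x j).le
  have : (1 + C2 * Real.sqrt N) ^ 2 = 1 + 2 * (C2 * Real.sqrt N) + K * N := by
    rw [← hCsq]
    nlinarith [Real.sq_sqrt hN0]
  have : 0 ≤ C2 * Real.sqrt N := by positivity
  linarith
end
end

section
/- If the stepsize parameter satisfies 0 < ε < min{1/2, 2π(λ/Λ)²}, then the weighted error of the asynchronous network Newton process decreases linearly in expectation: for all t ≥ 1, E[‖D(x(t−1))^{1/2}(x(t) − x*)‖] ≤ (2(2(1−δ)+αM)(F(x(0)) − F*)/(αm))^{1/2} ((1 − β)^{1/2})^t, where β = αmε(2πλ² − εΛ²)/(λπ) and ‖·‖ is the Euclidean norm. -/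
open Matrix BigOperators

noncomputable section

/-- Euclidean norm on `ℝⁿ`. -/
def enorm {n : ℕ} (v : Fin n → ℝ) : ℝ := Real.sqrt (∑ i, v i ^ 2)

/-! ### One-dimensional Taylor bounds -/

theorem aux_convex_tangent (g : ℝ → ℝ) (hd : Differentiable ℝ g)
    (hd' : Differentiable ℝ (deriv g)) (h2 : ∀ s, 0 ≤ deriv (deriv g) s) (x y : ℝ) :
    g x + deriv g x * (y - x) ≤ g y := by
  have hc : ConvexOn ℝ Set.univ g := convexOn_univ_of_deriv2_nonneg hd hd' (fun s => h2 s)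
  rcases lt_trichotomy x y with h | h | h
  · have := hc.deriv_le_slope (Set.mem_univ x) (Set.mem_univ y) h (hd x)
    rw [slope_def_field, le_div_iff₀ (by linarith)] at this
    linarith
  · subst h; simp
  · have := hc.slope_le_deriv (Set.mem_univ y) (Set.mem_univ x) h (hd x)
    rw [slope_def_field, div_le_iff₀ (by linarith)] at this
    linarith

theorem aux_taylor (f : ℝ → ℝ) (hf : ContDiff ℝ 2 f) (m M : ℝ)
    (h2 : ∀ s, m ≤ deriv (deriv f) s ∧ deriv (deriv f) s ≤ M) (x y : ℝ) :
    f x + deriv f x * (y - x) + m / 2 * (y - x) ^ 2 ≤ f y ∧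
    f y ≤ f x + deriv f x * (y - x) + M / 2 * (y - x) ^ 2 := by
  have hd : Differentiable ℝ f := hf.differentiable (by norm_num)
  have hf1 : ContDiff ℝ 1 (deriv f) := by
    have h : ContDiff ℝ (1 + 1) f := by
      convert hf using 1; norm_num
    exact (contDiff_succ_iff_deriv.1 h).2.2
  have hd' : Differentiable ℝ (deriv f) := hf1.differentiable (by norm_num)
  have key : ∀ (a b : ℝ), (∀ s, 0 ≤ a * deriv (deriv f) s + b) →
      a * f x + b / 2 * x ^ 2 + (a * deriv f x + b * x) * (y - x) ≤ a * f y + b / 2 * y ^ 2 := by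
    intro a b hab
    have hD : ∀ s, HasDerivAt (fun s => a * f s + b / 2 * s ^ 2) (a * deriv f s + b * s) s := by
      intro s
      have h1 := ((hd s).hasDerivAt.const_mul a).add (((hasDerivAt_id s).pow 2).const_mul (b / 2))
      exact h1.congr_deriv (by simp; ring)
    have hD1 : deriv (fun s => a * f s + b / 2 * s ^ 2) = fun s => a * deriv f s + b * s :=
      funext fun s => (hD s).deriv
    have hD2 : ∀ s, HasDerivAt (fun s => a * deriv f s + b * s) (a * deriv (deriv f) s + b) s := by
      intro s
      have h1 := ((hd' s).hasDerivAt.const_mul a).add ((hasDerivAt_id s).const_mul b)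
      exact h1.congr_deriv (by simp)
    have := aux_convex_tangent (fun s => a * f s + b / 2 * s ^ 2)
      (fun s => (hD s).differentiableAt)
      (by rw [hD1]; exact fun s => (hD2 s).differentiableAt)
      (by intro s; rw [hD1, (hD2 s).deriv]; exact hab s) x y
    rw [hD1] at this
    exact this
  constructor
  · have := key 1 (-m) (fun s => by linarith [(h2 s).1])
    nlinarith [this]
  · have := key (-1) M (fun s => by linarith [(h2 s).2])
    nlinarith [this]

/-! ### Quadratic forms of `I - W` and `B` -/

section quad
variable {n : ℕ} (W : Matrix (Fin n) (Fin n) ℝ)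

theorem aux_row (hWone : W.mulVec (fun _ => 1) = fun _ => 1) (i : Fin n) : ∑ j, W i j = 1 := by
  have := congrFun hWone i
  simpa [Matrix.mulVec, dotProduct] using this

theorem aux_ImW (x : Fin n → ℝ) (i : Fin n) :
    ((1 - W).mulVec x) i = x i - ∑ j, W i j * x j := by
  rw [Matrix.sub_mulVec, Matrix.one_mulVec]; rfl

theorem aux_dotW (x y : Fin n → ℝ) :
    x ⬝ᵥ (W.mulVec y) = ∑ i, ∑ j, W i j * (x i * y j) := by
  simp only [dotProduct, Matrix.mulVec, Finset.mul_sum]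
  exact Finset.sum_congr rfl fun i _ => Finset.sum_congr rfl fun j _ => by ring

theorem aux_sq_row (hrow : ∀ i, ∑ j, W i j = 1) (x : Fin n → ℝ) :
    ∑ i, ∑ j, W i j * x i ^ 2 = ∑ i, x i ^ 2 := by
  refine Finset.sum_congr rfl fun i _ => ?_
  rw [← Finset.sum_mul, hrow i, one_mul]

theorem aux_sq_col (hWsymm : W.IsSymm) (hrow : ∀ i, ∑ j, W i j = 1) (x : Fin n → ℝ) :
    ∑ i, ∑ j, W i j * x j ^ 2 = ∑ i, x i ^ 2 := by
  rw [Finset.sum_comm, ← aux_sq_row W hrow x]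
  refine Finset.sum_congr rfl fun i _ => Finset.sum_congr rfl fun j _ => ?_
  rw [hWsymm.apply i j]

theorem aux_Q_nonneg (hWsymm : W.IsSymm) (hWnonneg : ∀ i j, 0 ≤ W i j)
    (hrow : ∀ i, ∑ j, W i j = 1) (x : Fin n → ℝ) : 0 ≤ x ⬝ᵥ ((1 - W).mulVec x) := by
  rw [Matrix.sub_mulVec, Matrix.one_mulVec, dotProduct_sub, aux_dotW]
  have h1 : 0 ≤ ∑ i, ∑ j, W i j * (x i - x j) ^ 2 :=
    Finset.sum_nonneg fun i _ => Finset.sum_nonneg fun j _ =>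
      mul_nonneg (hWnonneg i j) (sq_nonneg _)
  have h2 : ∑ i, ∑ j, W i j * (x i - x j) ^ 2 = ∑ i, ∑ j, W i j * x i ^ 2 +
      ∑ i, ∑ j, W i j * x j ^ 2 - 2 * ∑ i, ∑ j, W i j * (x i * x j) := by
    simp only [Finset.mul_sum, ← Finset.sum_add_distrib, ← Finset.sum_sub_distrib]
    exact Finset.sum_congr rfl fun i _ => Finset.sum_congr rfl fun j _ => by ring
  rw [aux_sq_row W hrow, aux_sq_col W hWsymm hrow] at h2
  have h3 : x ⬝ᵥ x = ∑ i, x i ^ 2 := Finset.sum_congr rfl fun i _ => by ring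
  linarith

theorem aux_B_dot (x : Fin n → ℝ) :
    x ⬝ᵥ ((Bmat W).mulVec x) = ∑ i, (1 - 2 * W i i) * x i ^ 2 +
      ∑ i, ∑ j, W i j * (x i * x j) := by
  rw [Bmat, Matrix.add_mulVec, dotProduct_add, aux_dotW W, Matrix.sub_mulVec, Matrix.one_mulVec,
    Matrix.smul_mulVec]
  congr 1
  simp only [dotProduct, Pi.sub_apply, Pi.smul_apply, Matrix.mulVec_diagonal, smul_eq_mul]
  exact Finset.sum_congr rfl fun i _ => by ring

theorem aux_B_nonneg (hWsymm : W.IsSymm) (hWnonneg : ∀ i j, 0 ≤ W i j)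
    (hrow : ∀ i, ∑ j, W i j = 1) (x : Fin n → ℝ) : 0 ≤ x ⬝ᵥ ((Bmat W).mulVec x) := by
  rw [aux_B_dot]
  have h1 : ∑ i, 4 * (W i i * x i ^ 2) ≤ ∑ i, ∑ j, W i j * (x i + x j) ^ 2 := by
    refine Finset.sum_le_sum fun i _ => ?_
    refine le_trans (le_of_eq ?_) (Finset.single_le_sum
      (f := fun j => W i j * (x i + x j) ^ 2) (fun j _ => mul_nonneg (hWnonneg i j) (sq_nonneg _))
      (Finset.mem_univ i))
    ring
  have h2 : ∑ i, ∑ j, W i j * (x i + x j) ^ 2 = ∑ i, ∑ j, W i j * x i ^ 2 +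
      ∑ i, ∑ j, W i j * x j ^ 2 + 2 * ∑ i, ∑ j, W i j * (x i * x j) := by
    simp only [Finset.mul_sum, ← Finset.sum_add_distrib]
    exact Finset.sum_congr rfl fun i _ => Finset.sum_congr rfl fun j _ => by ring
  rw [aux_sq_row W hrow, aux_sq_col W hWsymm hrow] at h2
  have h3 : ∑ i, (1 - 2 * W i i) * x i ^ 2 = ∑ i, x i ^ 2 - 1 / 2 * ∑ i, 4 * (W i i * x i ^ 2) := by
    rw [Finset.mul_sum, ← Finset.sum_sub_distrib]
    exact Finset.sum_congr rfl fun i _ => by ring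
  linarith

theorem aux_B_le (hWsymm : W.IsSymm) (hWnonneg : ∀ i j, 0 ≤ W i j)
    (hrow : ∀ i, ∑ j, W i j = 1) (x : Fin n → ℝ) :
    x ⬝ᵥ ((Bmat W).mulVec x) ≤ ∑ i, 2 * (1 - W i i) * x i ^ 2 := by
  rw [aux_B_dot]
  have h := aux_Q_nonneg W hWsymm hWnonneg hrow x
  rw [Matrix.sub_mulVec, Matrix.one_mulVec, dotProduct_sub, aux_dotW] at h
  have h3 : x ⬝ᵥ x = ∑ i, x i ^ 2 := Finset.sum_congr rfl fun i _ => by ring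
  have h4 : ∑ i, 2 * (1 - W i i) * x i ^ 2 = ∑ i, (1 - 2 * W i i) * x i ^ 2 + ∑ i, x i ^ 2 := by
    rw [← Finset.sum_add_distrib]
    exact Finset.sum_congr rfl fun i _ => by ring
  linarith

theorem aux_B_symm (hWsymm : W.IsSymm) : (Bmat W)ᵀ = Bmat W := by
  simp [Bmat, Matrix.transpose_add, Matrix.transpose_sub, hWsymm.eq]

end quad

/-! ### Norm bound from form bound -/

theorem aux_opnorm {n : ℕ} (A : Matrix (Fin n) (Fin n) ℝ) (hA : Aᵀ = A) (L : ℝ) (hL : 0 < L)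
    (h0 : ∀ v, 0 ≤ v ⬝ᵥ (A.mulVec v)) (h1 : ∀ v, v ⬝ᵥ (A.mulVec v) ≤ L * (v ⬝ᵥ v))
    (v : Fin n → ℝ) : (A.mulVec v) ⬝ᵥ (A.mulVec v) ≤ L ^ 2 * (v ⬝ᵥ v) := by
  set u := A.mulVec v with hu
  have hsym : v ⬝ᵥ (A.mulVec u) = u ⬝ᵥ u := by
    rw [Matrix.dotProduct_mulVec, ← Matrix.mulVec_transpose, hA]
  have hk := h0 (L • v - u)
  rw [Matrix.mulVec_sub, Matrix.mulVec_smul, ← hu] at hk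
  simp only [sub_dotProduct, dotProduct_sub, smul_dotProduct, dotProduct_smul, smul_eq_mul,
    hsym] at hk
  have e1 := h1 v
  have e2 := h1 u
  rw [← hu] at e1
  have : L * (L * (v ⬝ᵥ u)) ≤ L * (L * (L * (v ⬝ᵥ v))) := by gcongr
  have : L * (u ⬝ᵥ u) ≤ L * (L ^ 2 * (v ⬝ᵥ v)) := by linarith
  exact le_of_mul_le_mul_left this hL

/-! ### The approximate Hessian inverse -/

section hess
variable {n : ℕ} (W : Matrix (Fin n) (Fin n) ℝ) (f : Fin n → ℝ → ℝ) (α : ℝ)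

theorem aux_Hhat_symm (hWsymm : W.IsSymm) (x : Fin n → ℝ) :
    (Hhatinv W f α x)ᵀ = Hhatinv W f α x := by
  simp only [Hhatinv, Dinvhalf, Matrix.transpose_mul, Matrix.transpose_add, Matrix.transpose_one,
    Matrix.diagonal_transpose, aux_B_symm W hWsymm, Matrix.mul_assoc]

theorem aux_Hhat_dot (x : Fin n → ℝ) (hd : ∀ i, 0 < dEntry W f α x i) (v : Fin n → ℝ) :
    v ⬝ᵥ ((Hhatinv W f α x).mulVec v) = ∑ i, v i ^ 2 / dEntry W f α x i +
      (fun i => v i / dEntry W f α x i) ⬝ᵥ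
        ((Bmat W).mulVec (fun i => v i / dEntry W f α x i)) := by
  have hE : ∀ u : Fin n → ℝ, (Dinvhalf W f α x).mulVec u =
      fun i => (Real.sqrt (dEntry W f α x i))⁻¹ * u i := by
    intro u; ext i; rw [Dinvhalf, Matrix.mulVec_diagonal]
  have hs : ∀ i, (Real.sqrt (dEntry W f α x i))⁻¹ * (Real.sqrt (dEntry W f α x i))⁻¹
      = (dEntry W f α x i)⁻¹ := by
    intro i; rw [← mul_inv, Real.mul_self_sqrt (hd i).le]
  have hw : (Dinvhalf W f α x).mulVec ((Dinvhalf W f α x).mulVec v) =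
      fun i => v i / dEntry W f α x i := by
    rw [hE, hE]; ext i
    rw [← mul_assoc, hs, div_eq_inv_mul]
  have e : (Hhatinv W f α x).mulVec v = (fun i => v i / dEntry W f α x i) +
      (Dinvhalf W f α x).mulVec ((Dinvhalf W f α x).mulVec
        ((Bmat W).mulVec (fun i => v i / dEntry W f α x i))) := by
    rw [Hhatinv, ← Matrix.mulVec_mulVec, ← Matrix.mulVec_mulVec, Matrix.add_mulVec,
      Matrix.one_mulVec, Matrix.mulVec_add, hw, ← Matrix.mulVec_mulVec, ← Matrix.mulVec_mulVec, hw]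
  rw [e, dotProduct_add]
  congr 1
  · exact Finset.sum_congr rfl fun i _ => by ring
  · rw [hE, hE]
    refine Finset.sum_congr rfl fun i _ => ?_
    beta_reduce
    rw [← mul_assoc ((Real.sqrt (dEntry W f α x i))⁻¹), hs]
    ring

end hess

/-! ### Objective bounds -/

section obj
variable {n : ℕ} (W : Matrix (Fin n) (Fin n) ℝ) (f : Fin n → ℝ → ℝ) (α m M : ℝ)

theorem aux_F_strong (hWsymm : W.IsSymm) (hWnonneg : ∀ i j, 0 ≤ W i j)
    (hrow : ∀ i, ∑ j, W i j = 1) (hf : ∀ i, ContDiff ℝ 2 (f i))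
    (hd2 : ∀ i s, m ≤ d2 f i s ∧ d2 f i s ≤ M) (hα : 0 < α) (x y : Fin n → ℝ) :
    Fobj W f α x + ∑ i, (gvec W f α x i * (y i - x i) + α * m / 2 * (y i - x i) ^ 2)
      ≤ Fobj W f α y := by
  have hq := aux_Q_nonneg W hWsymm hWnonneg hrow (y - x)
  have hsy : x ⬝ᵥ ((1 - W).mulVec y) = y ⬝ᵥ ((1 - W).mulVec x) := by
    rw [Matrix.dotProduct_mulVec, ← Matrix.mulVec_transpose, dotProduct_comm]
    simp [hWsymm.eq]
  rw [Matrix.mulVec_sub, dotProduct_sub, sub_dotProduct, sub_dotProduct, hsy] at hq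
  have hg : ∑ i, (gvec W f α x i * (y i - x i) + α * m / 2 * (y i - x i) ^ 2) =
      (y ⬝ᵥ ((1 - W).mulVec x) - x ⬝ᵥ ((1 - W).mulVec x)) +
      α * ∑ i, (deriv (f i) (x i) * (y i - x i) + m / 2 * (y i - x i) ^ 2) := by
    simp only [dotProduct, gvec, Finset.mul_sum, ← Finset.sum_add_distrib,
      ← Finset.sum_sub_distrib]
    exact Finset.sum_congr rfl fun i _ => by ring
  have ht : ∑ i, f i (x i) + ∑ i, (deriv (f i) (x i) * (y i - x i) + m / 2 * (y i - x i) ^ 2)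
      ≤ ∑ i, f i (y i) := by
    rw [← Finset.sum_add_distrib]
    refine Finset.sum_le_sum fun i _ => ?_
    have := (aux_taylor (f i) (hf i) m M (hd2 i) (x i) (y i)).1
    linarith
  have ht' := mul_le_mul_of_nonneg_left ht hα.le
  rw [mul_add] at ht'
  rw [hg]
  unfold Fobj
  linarith

theorem aux_F_coord (hWsymm : W.IsSymm) (hf : ∀ i, ContDiff ℝ 2 (f i))
    (hd2 : ∀ i s, m ≤ d2 f i s ∧ d2 f i s ≤ M) (hα : 0 < α) (x : Fin n → ℝ) (i : Fin n) (s : ℝ) :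
    Fobj W f α (Function.update x i (x i + s)) ≤
      Fobj W f α x + s * gvec W f α x i + s ^ 2 / 2 * (1 - W i i + α * M) := by
  have hu : Function.update x i (x i + s) = x + Pi.single i s := by
    ext j
    by_cases h : j = i
    · subst h; simp
    · simp [h]
  have hsy : x ⬝ᵥ ((1 - W).mulVec (Pi.single i s)) = (Pi.single i s) ⬝ᵥ ((1 - W).mulVec x) := by
    rw [Matrix.dotProduct_mulVec, ← Matrix.mulVec_transpose, dotProduct_comm]
    simp [hWsymm.eq]
  have hq : (x + Pi.single i s) ⬝ᵥ ((1 - W).mulVec (x + Pi.single i s)) =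
      x ⬝ᵥ ((1 - W).mulVec x) + 2 * (s * ((1 - W).mulVec x) i) + s ^ 2 * (1 - W i i) := by
    rw [Matrix.mulVec_add, dotProduct_add, add_dotProduct, add_dotProduct, hsy,
      single_dotProduct, single_dotProduct, aux_ImW W (Pi.single i s)]
    simp [Pi.single_apply]
    ring
  have hs : ∑ j, f j (Function.update x i (x i + s) j) - ∑ j, f j (x j)
      = f i (x i + s) - f i (x i) := by
    rw [← Finset.sum_sub_distrib, Finset.sum_eq_single i]
    · simp
    · intro j _ hj; simp [hj]
    · simp
  have ht := (aux_taylor (f i) (hf i) m M (hd2 i) (x i) (x i + s)).2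
  have ht' : α * (f i (x i + s) - f i (x i)) ≤ α * (deriv (f i) (x i) * s + M / 2 * s ^ 2) := by
    apply mul_le_mul_of_nonneg_left _ hα.le
    rw [add_sub_cancel_left] at ht
    linarith
  rw [← hs, mul_sub] at ht'
  have e : Fobj W f α (Function.update x i (x i + s)) =
      1 / 2 * ((x + Pi.single i s) ⬝ᵥ ((1 - W).mulVec (x + Pi.single i s))) +
      α * ∑ j, f j (Function.update x i (x i + s) j) := by
    rw [← hu]; rfl
  rw [e, hq]
  unfold Fobj gvec
  linarith

theorem aux_grad_zero (hWsymm : W.IsSymm) (hf : ∀ i, ContDiff ℝ 2 (f i))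
    (hWlt : ∀ i j, W i j < 1)
    (hd2 : ∀ i s, m ≤ d2 f i s ∧ d2 f i s ≤ M) (hα : 0 < α) (hM : 0 < M) (xs : Fin n → ℝ)
    (hmin : ∀ y, Fobj W f α xs ≤ Fobj W f α y) (i : Fin n) : gvec W f α xs i = 0 := by
  have hC : 0 < 1 - W i i + α * M := by
    have := hWlt i i
    have := mul_pos hα hM
    linarith
  set C := 1 - W i i + α * M with hCd
  set g := gvec W f α xs i with hg
  have h := (hmin _).trans (aux_F_coord W f α m M hWsymm hf hd2 hα xs i (-g / C))
  rw [← hCd, ← hg] at h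
  have e : -g / C * g + (-g / C) ^ 2 / 2 * C = - (g ^ 2 / (2 * C)) := by
    field_simp; ring
  have h3 : g ^ 2 / (2 * C) ≤ 0 := by linarith
  have h4 : 0 < 2 * C := by linarith
  rw [div_le_iff₀ h4, zero_mul] at h3
  exact pow_eq_zero_iff (two_ne_zero) |>.1 (le_antisymm h3 (sq_nonneg g))

end obj

/-! ### Expected one-step decrease -/

theorem aux_step {n : ℕ} (W : Matrix (Fin n) (Fin n) ℝ) (hWsymm : W.IsSymm)
    (hWnonneg : ∀ i j, 0 ≤ W i j) (hrow : ∀ i, ∑ j, W i j = 1)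
    (δ Δ : ℝ) (hδΔ : δ ≤ Δ) (hΔ : Δ < 1)
    (hWdiag : ∀ i, δ ≤ W i i ∧ W i i ≤ Δ)
    (f : Fin n → ℝ → ℝ) (hf : ∀ i, ContDiff ℝ 2 (f i))
    (m M : ℝ) (hm : 0 < m) (hmM : m ≤ M)
    (hd2 : ∀ i s, m ≤ d2 f i s ∧ d2 f i s ≤ M)
    (α : ℝ) (hα : 0 < α)
    (p : Fin n → ℝ) (pmin : ℝ) (hpmin : 0 < pmin)
    (hp : ∀ i, pmin ≤ p i) (hpsum : ∑ i, p i = 1)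
    (xstar : Fin n → ℝ)
    (ρ lam Lam : ℝ) (hρ : ρ = 2 * (1 - δ) / (2 * (1 - δ) + α * m))
    (hlam : lam = 1 / (2 * (1 - δ) + α * M))
    (hLam : Lam = (1 + ρ) / (2 * (1 - Δ) + α * m))
    (ε : ℝ) (hε : 0 < ε) (hεlt : ε < 2 * pmin * (lam / Lam) ^ 2)
    (β : ℝ) (hβ : β = α * m * ε * (2 * pmin * lam ^ 2 - ε * Lam ^ 2) / (lam * pmin))
    (x : Fin n → ℝ) :
    ∑ i, p i * (Fobj W f α (upd W f α p ε x i) - Fobj W f α xstar) ≤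
      (1 - β) * (Fobj W f α x - Fobj W f α xstar) := by
  have hαm : 0 < α * m := mul_pos hα hm
  have hαmM : α * m ≤ α * M := mul_le_mul_of_nonneg_left hmM hα.le
  have hδ1 : 0 < 1 - δ := by linarith
  have hΔ1 : 0 < 1 - Δ := by linarith
  have hlampos : 0 < lam := by rw [hlam]; exact one_div_pos.2 (by linarith)
  have hρpos : 0 < ρ := by rw [hρ]; positivity
  have hLampos : 0 < Lam := by rw [hLam]; positivity
  -- entries of D
  have hG : ∀ i, α * m ≤ α * d2 f i (x i) ∧ α * d2 f i (x i) ≤ α * M := fun i =>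
    ⟨mul_le_mul_of_nonneg_left (hd2 i _).1 hα.le, mul_le_mul_of_nonneg_left (hd2 i _).2 hα.le⟩
  have hdlow : ∀ i, 2 * (1 - Δ) + α * m ≤ dEntry W f α x i := fun i => by
    unfold dEntry; linarith [(hG i).1, (hWdiag i).2]
  have hdup : ∀ i, dEntry W f α x i ≤ 2 * (1 - δ) + α * M := fun i => by
    unfold dEntry; linarith [(hG i).2, (hWdiag i).1]
  have hdpos : ∀ i, 0 < dEntry W f α x i := fun i => lt_of_lt_of_le (by positivity) (hdlow i)
  set A := Hhatinv W f α x with hA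
  have hAlow : ∀ v, lam * (v ⬝ᵥ v) ≤ v ⬝ᵥ (A.mulVec v) := by
    intro v
    rw [hA, aux_Hhat_dot W f α x hdpos v]
    have hB := aux_B_nonneg W hWsymm hWnonneg hrow (fun i => v i / dEntry W f α x i)
    have : lam * (v ⬝ᵥ v) ≤ ∑ i, v i ^ 2 / dEntry W f α x i := by
      rw [dotProduct, Finset.mul_sum]
      refine Finset.sum_le_sum fun i _ => ?_
      rw [hlam, div_mul_eq_mul_div, one_mul, ← sq]
      exact div_le_div_of_nonneg_left (sq_nonneg _) (hdpos i) (hdup i)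
    linarith
  have hAup : ∀ v, v ⬝ᵥ (A.mulVec v) ≤ Lam * (v ⬝ᵥ v) := by
    intro v
    rw [hA, aux_Hhat_dot W f α x hdpos v]
    have hB := aux_B_le W hWsymm hWnonneg hrow (fun i => v i / dEntry W f α x i)
    refine (add_le_add_right hB _).trans ?_
    rw [dotProduct, Finset.mul_sum, ← Finset.sum_add_distrib]
    refine Finset.sum_le_sum fun i _ => ?_
    have hd := hdpos i
    have h1 : 2 * (1 - W i i) ≤ ρ * dEntry W f α x i := by
      rw [hρ, div_mul_eq_mul_div, le_div_iff₀ (by positivity)]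
      unfold dEntry
      have a1 : (2 * (1 - W i i)) * (α * m) ≤ (2 * (1 - δ)) * (α * d2 f i (x i)) := by
        apply mul_le_mul _ (hG i).1 hαm.le (by linarith)
        linarith [(hWdiag i).1]
      linarith
    have h2 : 2 * (1 - W i i) * (v i / dEntry W f α x i) ^ 2 ≤ ρ * (v i ^ 2 / dEntry W f α x i) := by
      have := mul_le_mul_of_nonneg_right h1 (sq_nonneg (v i / dEntry W f α x i))
      refine this.trans (le_of_eq ?_)
      field_simp
    have h3 : v i ^ 2 / dEntry W f α x i ≤ v i ^ 2 / (2 * (1 - Δ) + α * m) :=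
      div_le_div_of_nonneg_left (sq_nonneg _) (by positivity) (hdlow i)
    have h4 : (1 + ρ) * (v i ^ 2 / dEntry W f α x i) ≤
        (1 + ρ) * (v i ^ 2 / (2 * (1 - Δ) + α * m)) :=
      mul_le_mul_of_nonneg_left h3 (by linarith)
    have h5 : Lam * (v i * v i) = (1 + ρ) * (v i ^ 2 / (2 * (1 - Δ) + α * m)) := by
      rw [hLam]; ring
    rw [h5]
    linarith
  have hAnn : ∀ v, 0 ≤ v ⬝ᵥ (A.mulVec v) := fun v =>
    le_trans (mul_nonneg hlampos.le (Finset.sum_nonneg fun i _ => mul_self_nonneg _)) (hAlow v)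
  set g := gvec W f α x with hg
  set d := A.mulVec g with hd
  have hdd : d ⬝ᵥ d ≤ Lam ^ 2 * (g ⬝ᵥ g) :=
    aux_opnorm A (aux_Hhat_symm W f α hWsymm x) Lam hLampos hAnn hAup g
  have hgd : lam * (g ⬝ᵥ g) ≤ g ⬝ᵥ d := hAlow g
  have hppos : ∀ i, 0 < p i := fun i => hpmin.trans_le (hp i)
  -- coordinatewise decrease
  have hcoord : ∀ i, p i * (Fobj W f α (upd W f α p ε x i) - Fobj W f α xstar) ≤
      p i * (Fobj W f α x - Fobj W f α xstar) - ε * (g i * d i) +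
        ε ^ 2 / (2 * lam * pmin) * (d i * d i) := by
    intro i
    have h := aux_F_coord W f α m M hWsymm hf hd2 hα x i (-(ε / p i * d i))
    have hu : upd W f α p ε x i = Function.update x i (x i + -(ε / p i * d i)) := by
      rw [upd, ← sub_eq_add_neg]
    rw [hu]
    have hC : 1 - W i i + α * M ≤ 1 / lam := by
      rw [hlam, one_div_one_div]; linarith [(hWdiag i).1]
    have h2 : p i * ((-(ε / p i * d i)) ^ 2 / 2 * (1 - W i i + α * M)) ≤
        ε ^ 2 / (2 * lam * pmin) * (d i * d i) := by
      have e1 : p i * ((-(ε / p i * d i)) ^ 2 / 2 * (1 - W i i + α * M)) =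
          (ε ^ 2 * (d i * d i) / 2) * ((1 / p i) * (1 - W i i + α * M)) := by
        have := (hppos i).ne'
        field_simp
      have e2 : ε ^ 2 / (2 * lam * pmin) * (d i * d i) =
          (ε ^ 2 * (d i * d i) / 2) * ((1 / pmin) * (1 / lam)) := by
        field_simp
      rw [e1, e2]
      apply mul_le_mul_of_nonneg_left _
        (by have := mul_self_nonneg (d i); positivity)
      have h01 : 0 ≤ 1 - W i i + α * M := by linarith [(hWdiag i).2]
      exact mul_le_mul (one_div_le_one_div_of_le hpmin (hp i)) hC h01 (by positivity)
    have h3 := mul_le_mul_of_nonneg_left h (hppos i).le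
    have e3 : p i * (-(ε / p i * d i) * gvec W f α x i) = - (ε * (g i * d i)) := by
      have := (hppos i).ne'
      rw [← hg]
      field_simp
    rw [mul_add, mul_add, e3] at h3
    linarith
  have hsum := Finset.sum_le_sum fun i (_ : i ∈ Finset.univ) => hcoord i
  rw [Finset.sum_add_distrib, Finset.sum_sub_distrib, ← Finset.sum_mul, hpsum, one_mul,
    ← Finset.mul_sum, ← Finset.mul_sum] at hsum
  change _ ≤ _ - ε * (g ⬝ᵥ d) + ε ^ 2 / (2 * lam * pmin) * (d ⬝ᵥ d) at hsum
  -- Polyak-Lojasiewicz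
  have hPL : 2 * (α * m) * (Fobj W f α x - Fobj W f α xstar) ≤ g ⬝ᵥ g := by
    have h := aux_F_strong W f α m M hWsymm hWnonneg hrow hf hd2 hα x xstar
    have h2 : -(∑ i, g i * g i) / (2 * (α * m)) ≤
        ∑ i, (g i * (xstar i - x i) + α * m / 2 * (xstar i - x i) ^ 2) := by
      rw [← Finset.sum_neg_distrib, Finset.sum_div]
      refine Finset.sum_le_sum fun i _ => ?_
      rw [div_le_iff₀ (by positivity)]
      nlinarith [sq_nonneg (g i + α * m * (xstar i - x i))]
    have h3 : -(g ⬝ᵥ g) / (2 * (α * m)) ≤ Fobj W f α xstar - Fobj W f α x := by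
      have : (g ⬝ᵥ g) = ∑ i, g i * g i := rfl
      rw [this]; linarith
    rw [div_le_iff₀ (by positivity)] at h3
    linarith
  have hpos : 0 < 2 * pmin * lam ^ 2 - ε * Lam ^ 2 := by
    rw [div_pow, mul_div_assoc', lt_div_iff₀ (by positivity)] at hεlt
    linarith
  have s1 := mul_le_mul_of_nonneg_left hgd hε.le
  have s2 := mul_le_mul_of_nonneg_left hdd
    (by positivity : 0 ≤ ε ^ 2 / (2 * lam * pmin))
  have s3 := mul_le_mul_of_nonneg_left hPL
    (by positivity : 0 ≤ ε * (2 * pmin * lam ^ 2 - ε * Lam ^ 2) / (2 * lam * pmin))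
  have e1 : ε * (lam * (g ⬝ᵥ g)) - ε ^ 2 / (2 * lam * pmin) * (Lam ^ 2 * (g ⬝ᵥ g)) =
      ε * (2 * pmin * lam ^ 2 - ε * Lam ^ 2) / (2 * lam * pmin) * (g ⬝ᵥ g) := by
    field_simp
  have e2 : ε * (2 * pmin * lam ^ 2 - ε * Lam ^ 2) / (2 * lam * pmin) *
      (2 * (α * m) * (Fobj W f α x - Fobj W f α xstar)) =
      β * (Fobj W f α x - Fobj W f α xstar) := by
    rw [hβ]; field_simp
  rw [e2] at s3
  linarith

/-! ### Probability -/

section prob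
open MeasureTheory ProbabilityTheory

theorem aux_integrable {n : ℕ} {Ω S : Type*} [MeasurableSpace Ω] (μ : Measure Ω)
    [IsProbabilityMeasure μ] [MeasurableSpace S] [Finite S] [MeasurableSingletonClass S]
    (Y : Ω → S) (hY : Measurable Y) (Φ : S → Fin n → ℝ) (h : (Fin n → ℝ) → ℝ) :
    Integrable (fun ω => h (Φ (Y ω))) μ := by
  have : IsFiniteMeasure (Measure.map Y μ) := inferInstance
  exact (Integrable.of_finite (f := fun s => h (Φ s)) (μ := Measure.map Y μ)).comp_measurable hY

theorem aux_factor {n : ℕ} {Ω : Type*} (U : (Fin n → ℝ) → Fin n → (Fin n → ℝ))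
    (I : ℕ → Ω → Fin n) (x0 : Fin n → ℝ) (X : ℕ → Ω → Fin n → ℝ)
    (hX0 : ∀ ω, X 0 ω = x0)
    (hXsucc : ∀ (t : ℕ) (ω : Ω), X (t + 1) ω = U (X t ω) (I (t + 1) ω)) (t : ℕ) :
    ∃ Φ : ((Finset.range (t + 1) : Finset ℕ) → Fin n) → (Fin n → ℝ),
      ∀ ω, X t ω = Φ (fun s => I s ω) := by
  induction t with
  | zero => exact ⟨fun _ => x0, hX0⟩
  | succ t ih =>
    obtain ⟨Φ, hΦ⟩ := ih
    refine ⟨fun y => U (Φ fun s => y ⟨s, by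
      have := Finset.mem_range.1 s.2
      exact Finset.mem_range.2 (by omega)⟩) (y ⟨t + 1, Finset.mem_range.2 (by omega)⟩), ?_⟩
    intro ω
    rw [hXsucc, hΦ]

theorem aux_expect {n : ℕ} {Ω : Type*} [MeasurableSpace Ω] (μ : Measure Ω)
    [IsProbabilityMeasure μ] (U : (Fin n → ℝ) → Fin n → (Fin n → ℝ))
    (p : Fin n → ℝ) (hp : ∀ i, 0 ≤ p i)
    (I : ℕ → Ω → Fin n) (hImeas : ∀ t, Measurable (I t))
    (hIindep : iIndepFun I μ)
    (hIdist : ∀ t i, μ {ω | I t ω = i} = ENNReal.ofReal (p i))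
    (x0 : Fin n → ℝ) (X : ℕ → Ω → Fin n → ℝ)
    (hX0 : ∀ ω, X 0 ω = x0)
    (hXsucc : ∀ (t : ℕ) (ω : Ω), X (t + 1) ω = U (X t ω) (I (t + 1) ω))
    (h : (Fin n → ℝ) → ℝ) (t : ℕ) :
    ∫ ω, h (X (t + 1) ω) ∂μ = ∫ ω, ∑ i, p i * h (U (X t ω) i) ∂μ := by
  obtain ⟨Φ, hΦ⟩ := aux_factor U I x0 X hX0 hXsucc t
  set Y : Ω → ((Finset.range (t + 1) : Finset ℕ) → Fin n) := fun ω s => I s ω with hY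
  have hYm : Measurable Y := measurable_pi_lambda _ fun s => hImeas s
  have hind : IndepFun Y (I (t + 1)) μ := by
    have := hIindep.indepFun_finset (Finset.range (t + 1)) {t + 1} (by simp) hImeas
    exact this.comp (φ := id)
      (ψ := fun z : (({t + 1} : Finset ℕ) → Fin n) => z ⟨t + 1, by simp⟩)
      measurable_id (measurable_pi_apply _)
  have hterm : ∀ i, ∫ ω, (if I (t + 1) ω = i then (1 : ℝ) else 0) * h (U (X t ω) i) ∂μ
      = p i * ∫ ω, h (U (X t ω) i) ∂μ := by
    intro i
    have hi := (hind.symm.comp (φ := fun j : Fin n => if j = i then (1 : ℝ) else 0)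
      (ψ := fun y => h (U (Φ y) i)) Measurable.of_discrete Measurable.of_discrete)
    have := hi.integral_fun_mul_eq_mul_integral
      (Measurable.of_discrete.comp (hImeas (t + 1))).aestronglyMeasurable
      (Measurable.of_discrete.comp hYm).aestronglyMeasurable
    simp only [Function.comp] at this
    simp only [hΦ]
    rw [this]
    congr 1
    have e : (fun ω => if I (t + 1) ω = i then (1 : ℝ) else 0) =
        Set.indicator {ω | I (t + 1) ω = i} 1 := by
      ext ω; simp [Set.indicator_apply]
    have hms : MeasurableSet {ω | I (t + 1) ω = i} := hImeas (t + 1) (measurableSet_singleton i)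
    rw [e, integral_indicator_one hms, Measure.real, hIdist, ENNReal.toReal_ofReal (hp i)]
  have hint : ∀ i, Integrable (fun ω => h (U (X t ω) i)) μ := by
    intro i
    simp only [hΦ]
    exact aux_integrable μ Y hYm Φ (fun x => h (U x i))
  have hint2 : ∀ i, Integrable
      (fun ω => (if I (t + 1) ω = i then (1 : ℝ) else 0) * h (U (X t ω) i)) μ := by
    intro i
    have e : (fun ω => (if I (t + 1) ω = i then (1 : ℝ) else 0) * h (U (X t ω) i)) =
        Set.indicator {ω | I (t + 1) ω = i} (fun ω => h (U (X t ω) i)) := by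
      ext ω; simp [Set.indicator_apply]
    rw [e]
    exact (hint i).indicator (hImeas (t + 1) (measurableSet_singleton i))
  have hL : ∀ ω, h (X (t + 1) ω) =
      ∑ i, (if I (t + 1) ω = i then (1 : ℝ) else 0) * h (U (X t ω) i) := by
    intro ω; rw [hXsucc]; simp
  simp only [hL]
  rw [integral_finsetSum _ fun i _ => hint2 i,
    integral_finsetSum _ fun i _ => (hint i).const_mul (p i)]
  refine Finset.sum_congr rfl fun i _ => ?_
  rw [hterm, integral_const_mul]

end prob

/-- Linear decrease in expectation of the weighted error:
`E[‖D(x(t−1))^{1/2}(x(t) − x*)‖] ≤ (2(2(1−δ)+αM)(F(x(0)) − F*)/(αm))^{1/2} ((1 − β)^{1/2})^t`. -/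
theorem stmt18 (n : ℕ) (hn : 1 ≤ n)
    (W : Matrix (Fin n) (Fin n) ℝ) (hWsymm : W.IsSymm)
    (hWnonneg : ∀ i j, 0 ≤ W i j) (hWlt : ∀ i j, W i j < 1)
    (hWone : W.mulVec (fun _ => 1) = fun _ => 1)
    (hWnull : ∀ x : Fin n → ℝ, ((1 - W).mulVec x = 0 ↔ ∃ c : ℝ, x = fun _ => c))
    (δ Δ : ℝ) (hδ : 0 < δ) (hδΔ : δ ≤ Δ) (hΔ : Δ < 1)
    (hWdiag : ∀ i, δ ≤ W i i ∧ W i i ≤ Δ)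
    (f : Fin n → ℝ → ℝ) (hf : ∀ i, ContDiff ℝ 2 (f i))
    (hconv : ∀ i, ConvexOn ℝ Set.univ (f i))
    (m M : ℝ) (hm : 0 < m) (hmM : m ≤ M)
    (hd2 : ∀ i s, m ≤ d2 f i s ∧ d2 f i s ≤ M)
    (α : ℝ) (hα : 0 < α)
    (p : Fin n → ℝ) (pmin pmax : ℝ) (hpmin : 0 < pmin) (hpmax : pmax < 1)
    (hp : ∀ i, pmin ≤ p i ∧ p i ≤ pmax) (hpsum : ∑ i, p i = 1)
    (xstar : Fin n → ℝ) (hmin : ∀ y, Fobj W f α xstar ≤ Fobj W f α y)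
    (ρ lam Lam : ℝ) (hρ : ρ = 2 * (1 - δ) / (2 * (1 - δ) + α * m))
    (hlam : lam = 1 / (2 * (1 - δ) + α * M))
    (hLam : Lam = (1 + ρ) / (2 * (1 - Δ) + α * m))
    (ε : ℝ) (hε : 0 < ε) (hεlt : ε < min (1 / 2) (2 * pmin * (lam / Lam) ^ 2))
    (β : ℝ) (hβ : β = α * m * ε * (2 * pmin * lam ^ 2 - ε * Lam ^ 2) / (lam * pmin))
    (Ω : Type*) [MeasurableSpace Ω] (μ : MeasureTheory.Measure Ω)
    [MeasureTheory.IsProbabilityMeasure μ]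
    (I : ℕ → Ω → Fin n) (hImeas : ∀ t, Measurable (I t))
    (hIindep : ProbabilityTheory.iIndepFun I μ)
    (hIdist : ∀ t i, μ {ω | I t ω = i} = ENNReal.ofReal (p i))
    (x0 : Fin n → ℝ) (X : ℕ → Ω → Fin n → ℝ)
    (hX0 : ∀ ω, X 0 ω = x0)
    (hXsucc : ∀ (t : ℕ) (ω : Ω), X (t + 1) ω = upd W f α p ε (X t ω) (I (t + 1) ω))
    : ∀ t : ℕ, 1 ≤ t →
      ∫ ω, _root_.enorm ((Dhalf W f α (X (t - 1) ω)).mulVec (X t ω - xstar)) ∂μ ≤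
        Real.sqrt (2 * (2 * (1 - δ) + α * M) *
            (Fobj W f α x0 - Fobj W f α xstar) / (α * m)) *
          Real.sqrt (1 - β) ^ t := by
  have hrow := aux_row W hWone
  have hαm : 0 < α * m := mul_pos hα hm
  have hαmM : α * m ≤ α * M := mul_le_mul_of_nonneg_left hmM hα.le
  have hL : 0 < 2 * (1 - δ) + α * M := by linarith
  have hppos : ∀ i, 0 < p i := fun i => hpmin.trans_le (hp i).1
  have hlampos : 0 < lam := by rw [hlam]; exact one_div_pos.2 hL
  have hstep := aux_step W hWsymm hWnonneg hrow δ Δ hδΔ hΔ hWdiag f hf m M hm hmM hd2 α hα p pmin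
    hpmin (fun i => (hp i).1) hpsum xstar ρ lam Lam hρ hlam hLam ε hε
    (hεlt.trans_le (min_le_right _ _)) β hβ
  have hβ1 : 0 ≤ 1 - β := by
    have e : β = 2 * ε * (α * m * lam) - α * m * ε * (ε * Lam ^ 2) / (lam * pmin) := by
      rw [hβ]; field_simp
    have h1 : α * m * lam ≤ 1 := by
      rw [hlam, mul_one_div, div_le_one hL]; linarith
    have h2 : 0 ≤ α * m * ε * (ε * Lam ^ 2) / (lam * pmin) := by positivity
    have h3 : ε < 1 / 2 := hεlt.trans_le (min_le_left _ _)
    have h4 : 0 ≤ α * m * lam := by positivity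
    have h5 : 2 * ε * (α * m * lam) ≤ 1 * 1 := mul_le_mul (by linarith) h1 h4 (by norm_num)
    linarith
  have hfac := aux_factor (upd W f α p ε) I x0 X hX0 hXsucc
  have hYm : ∀ t, Measurable (fun ω (s : (Finset.range (t + 1) : Finset ℕ)) => I s ω) :=
    fun t => measurable_pi_lambda _ fun s => hImeas s
  have hint : ∀ (h : (Fin n → ℝ) → ℝ) t, MeasureTheory.Integrable (fun ω => h (X t ω)) μ := by
    intro h t
    obtain ⟨Φ, hΦ⟩ := hfac t
    simp only [hΦ]
    exact aux_integrable μ _ (hYm t) Φ h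
  -- linear decrease of the expected objective gap
  have hdec : ∀ t, ∫ ω, (Fobj W f α (X t ω) - Fobj W f α xstar) ∂μ ≤
      (1 - β) ^ t * (Fobj W f α x0 - Fobj W f α xstar) := by
    intro t
    induction t with
    | zero => simp [hX0]
    | succ t ih =>
      rw [aux_expect μ (upd W f α p ε) p (fun i => (hppos i).le) I hImeas hIindep hIdist x0 X hX0
        hXsucc (fun x => Fobj W f α x - Fobj W f α xstar) t]
      calc ∫ ω, ∑ i, p i * (Fobj W f α (upd W f α p ε (X t ω) i) - Fobj W f α xstar) ∂μ
          ≤ ∫ ω, (1 - β) * (Fobj W f α (X t ω) - Fobj W f α xstar) ∂μ :=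
            MeasureTheory.integral_mono
              (hint (fun x => ∑ i, p i * (Fobj W f α (upd W f α p ε x i) - Fobj W f α xstar)) t)
              (hint (fun x => (1 - β) * (Fobj W f α x - Fobj W f α xstar)) t)
              (fun ω => hstep (X t ω))
        _ = (1 - β) * ∫ ω, (Fobj W f α (X t ω) - Fobj W f α xstar) ∂μ :=
            MeasureTheory.integral_const_mul _ _
        _ ≤ (1 - β) * ((1 - β) ^ t * (Fobj W f α x0 - Fobj W f α xstar)) :=
            mul_le_mul_of_nonneg_left ih hβ1
        _ = _ := by ring
  -- pointwise bound of the weighted error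
  have hgz := aux_grad_zero W f α m M hWsymm hf hWlt hd2 hα (hm.trans_le hmM) xstar hmin
  have hpt : ∀ y x : Fin n → ℝ, _root_.enorm ((Dhalf W f α y).mulVec (x - xstar)) ≤
      Real.sqrt (2 * (2 * (1 - δ) + α * M) / (α * m) * (Fobj W f α x - Fobj W f α xstar)) := by
    intro y x
    unfold _root_.enorm
    apply Real.sqrt_le_sqrt
    have h := aux_F_strong W f α m M hWsymm hWnonneg hrow hf hd2 hα xstar x
    simp only [hgz, zero_mul, zero_add] at h
    rw [← Finset.mul_sum] at h
    have h1 : ∑ i, ((Dhalf W f α y).mulVec (x - xstar)) i ^ 2 ≤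
        (2 * (1 - δ) + α * M) * ∑ i, (x i - xstar i) ^ 2 := by
      rw [Finset.mul_sum]
      refine Finset.sum_le_sum fun i _ => ?_
      have hG1 : α * m ≤ α * d2 f i (y i) := mul_le_mul_of_nonneg_left (hd2 i _).1 hα.le
      have hG2 : α * d2 f i (y i) ≤ α * M := mul_le_mul_of_nonneg_left (hd2 i _).2 hα.le
      have hd0 : 0 ≤ dEntry W f α y i := by unfold dEntry; linarith [hWlt i i]
      rw [Dhalf, Matrix.mulVec_diagonal, mul_pow, Real.sq_sqrt hd0, Pi.sub_apply]
      refine mul_le_mul_of_nonneg_right ?_ (sq_nonneg _)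
      unfold dEntry; linarith [(hWdiag i).1]
    refine h1.trans ?_
    have h2 : (2 * (1 - δ) + α * M) * (α * m / 2 * ∑ i, (x i - xstar i) ^ 2) ≤
        (2 * (1 - δ) + α * M) * (Fobj W f α x - Fobj W f α xstar) :=
      mul_le_mul_of_nonneg_left (by linarith) hL.le
    rw [div_mul_eq_mul_div, le_div_iff₀ hαm]
    linarith
  intro t ht
  obtain ⟨k, rfl⟩ : ∃ k, t = k + 1 := ⟨t - 1, by omega⟩
  set K := 2 * (2 * (1 - δ) + α * M) / (α * m) with hK
  have hKpos : 0 < K := by positivity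
  have hI1 : MeasureTheory.Integrable (fun ω =>
      Real.sqrt (K * (Fobj W f α (X (k + 1) ω) - Fobj W f α xstar))) μ :=
    hint (fun x => Real.sqrt (K * (Fobj W f α x - Fobj W f α xstar))) (k + 1)
  have hI2 : MeasureTheory.Integrable (fun ω =>
      K * (Fobj W f α (X (k + 1) ω) - Fobj W f α xstar)) μ :=
    hint (fun x => K * (Fobj W f α x - Fobj W f α xstar)) (k + 1)
  calc ∫ ω, _root_.enorm ((Dhalf W f α (X (k + 1 - 1) ω)).mulVec (X (k + 1) ω - xstar)) ∂μ
      ≤ ∫ ω, Real.sqrt (K * (Fobj W f α (X (k + 1) ω) - Fobj W f α xstar)) ∂μ :=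
        MeasureTheory.integral_mono_of_nonneg
          (Filter.Eventually.of_forall fun ω => Real.sqrt_nonneg _) hI1
          (Filter.Eventually.of_forall fun ω => hpt _ _)
    _ ≤ Real.sqrt (∫ ω, K * (Fobj W f α (X (k + 1) ω) - Fobj W f α xstar) ∂μ) :=
        Real.strictConcaveOn_sqrt.concaveOn.le_map_integral
          Real.continuous_sqrt.continuousOn isClosed_Ici
          (Filter.Eventually.of_forall fun ω =>
            mul_nonneg hKpos.le (sub_nonneg.2 (hmin _))) hI2 hI1
    _ ≤ Real.sqrt (K * ((1 - β) ^ (k + 1) * (Fobj W f α x0 - Fobj W f α xstar))) := by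
        apply Real.sqrt_le_sqrt
        rw [MeasureTheory.integral_const_mul]
        exact mul_le_mul_of_nonneg_left (hdec (k + 1)) hKpos.le
    _ = _ := by
        have e : K * ((1 - β) ^ (k + 1) * (Fobj W f α x0 - Fobj W f α xstar)) =
            (2 * (2 * (1 - δ) + α * M) * (Fobj W f α x0 - Fobj W f α xstar) / (α * m)) *
              (1 - β) ^ (k + 1) := by
          rw [hK]; ring
        have e2 : (1 - β) ^ (k + 1) = (Real.sqrt (1 - β) ^ (k + 1)) ^ 2 := by
          rw [← pow_mul, mul_comm, pow_mul, Real.sq_sqrt hβ1]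
        rw [e, Real.sqrt_mul' _ (pow_nonneg hβ1 _), e2, Real.sqrt_sq (by positivity)]
end
end
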